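/- Let r_e, z_e, α : ℝ → ℝ be differentiable, and for h with α'(h) ≠ 0 set t_c(h) = ( r_e'(h) cos α(h) + z_e'(h) sin α(h) ) / α'(h), r_caustic(h) = r_e(h) − t_c(h)·sin α(h), and z_caustic(h) = z_e(h) + t_c(h)·cos α(h). Then for every φ, the exiting ray family F(h,φ,t) = ((r_e(h) − t sin α(h)) cos φ, (r_e(h) − t sin α(h)) sin φ, z_e(h) + t cos α(h)) satisfies: (i) F(h, φ, t_c(h)) = (r_caustic(h) cos φ, r_caustic(h) sin φ, z_caustic(h)); and (ii) the Jacobian determinant of F with respect to (h,φ,t) vanishes at (h, φ, t_c(h)). Hence the caustic surface of the lens is parameterized in cylindrical coordinates by (r, z) = (r_caustic(h), z_caustic(h)), φ ∈ [0, 2π). -/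

import Mathlib

open Matrix Real

/-- Radial coordinate of the exiting ray: `R(h,t) = r_e(h) − t sin α(h)`. -/
noncomputable def rayR (r_e α : ℝ → ℝ) (h t : ℝ) : ℝ := r_e h - t * Real.sin (α h)

/-- Axial coordinate of the exiting ray: `Z(h,t) = z_e(h) + t cos α(h)`. -/
noncomputable def rayZ (z_e α : ℝ → ℝ) (h t : ℝ) : ℝ := z_e h + t * Real.cos (α h)

/-- The exiting ray family `F(h,φ,t) = (R cos φ, R sin φ, Z)`. -/
noncomputable def rayF (r_e z_e α : ℝ → ℝ) (h φ t : ℝ) : Fin 3 → ℝ :=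
  ![rayR r_e α h t * Real.cos φ, rayR r_e α h t * Real.sin φ, rayZ z_e α h t]

/-- Jacobian determinant of `F` with respect to `(h, φ, t)`
(columns `∂F/∂h, ∂F/∂φ, ∂F/∂t`). -/
noncomputable def rayJdet (r_e z_e α : ℝ → ℝ) (h φ t : ℝ) : ℝ :=
  (Matrix.of fun i j : Fin 3 =>
    ![deriv (fun x => rayF r_e z_e α x φ t) h,
      deriv (fun x => rayF r_e z_e α h x t) φ,
      deriv (fun x => rayF r_e z_e α h φ x) t] j i).det

/-!
At a fixed angle `φ` the map from cylindrical to Cartesian coordinates is linear, so the Jacobian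
determinant of a rotationally symmetric family is the radial coordinate `R` times the Jacobian of
its meridional section `(h, t) ↦ (R, Z)`. For straight rays of direction `(-sin α, cos α)`, the
terms carrying `α'` combine by `sin² α + cos² α = 1`, and the meridional Jacobian becomes
`r_e' cos α + z_e' sin α - t α'`. It is affine in `t`, and its root is the critical distance.
-/

section Cylindrical

/-- The Cartesian coordinates of the point with cylindrical coordinates `(r, φ, z)`. The radius `r`
may be negative, as it is on a ray that has crossed the optical axis. -/
noncomputable def ofCylindrical (r φ z : ℝ) : Fin 3 → ℝ :=
  ![r * cos φ, r * sin φ, z]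

lemma hasDerivAt_ofCylindrical_meridian {ρ ζ : ℝ → ℝ} {ρ' ζ' x : ℝ}
    (hρ : HasDerivAt ρ ρ' x) (hζ : HasDerivAt ζ ζ' x) (φ : ℝ) :
    HasDerivAt (fun y ↦ ofCylindrical (ρ y) φ (ζ y)) (ofCylindrical ρ' φ ζ') x := by
  refine hasDerivAt_pi.2 fun i ↦ ?_
  fin_cases i
  · exact hρ.mul_const (cos φ)
  · exact hρ.mul_const (sin φ)
  · exact hζ

lemma hasDerivAt_ofCylindrical_angle (r φ z : ℝ) :
    HasDerivAt (fun θ ↦ ofCylindrical r θ z) ![-(r * sin φ), r * cos φ, 0] φ := by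
  refine hasDerivAt_pi.2 fun i ↦ ?_
  fin_cases i
  · simpa [ofCylindrical] using (hasDerivAt_cos φ).const_mul r
  · exact (hasDerivAt_sin φ).const_mul r
  · exact hasDerivAt_const φ z

lemma det_ofCylindrical_columns (r φ r₁ z₁ r₂ z₂ : ℝ) :
    (Matrix.of fun i j : Fin 3 ↦
      ![ofCylindrical r₁ φ z₁, ![-(r * sin φ), r * cos φ, 0], ofCylindrical r₂ φ z₂] j i).det =
      r * (r₁ * z₂ - r₂ * z₁) := by
  simp only [det_fin_three, of_apply, ofCylindrical, cons_val]
  linear_combination r * (r₁ * z₂ - r₂ * z₁) * sin_sq_add_cos_sq φ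

end Cylindrical

section RayFamily

variable {r_e z_e α : ℝ → ℝ} {r' z' α' h : ℝ}

lemma hasDerivAt_rayR_height (hr : HasDerivAt r_e r' h) (hα : HasDerivAt α α' h) (t : ℝ) :
    HasDerivAt (fun x ↦ rayR r_e α x t) (r' - t * (cos (α h) * α')) h :=
  hr.sub (hα.sin.const_mul t)

lemma hasDerivAt_rayZ_height (hz : HasDerivAt z_e z' h) (hα : HasDerivAt α α' h) (t : ℝ) :
    HasDerivAt (fun x ↦ rayZ z_e α x t) (z' + t * (-sin (α h) * α')) h :=
  hz.add (hα.cos.const_mul t)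

lemma hasDerivAt_rayR_distance (r_e α : ℝ → ℝ) (h t : ℝ) :
    HasDerivAt (rayR r_e α h) (-sin (α h)) t :=
  (hasDerivAt_mul_const (sin (α h))).const_sub (r_e h)

lemma hasDerivAt_rayZ_distance (z_e α : ℝ → ℝ) (h t : ℝ) :
    HasDerivAt (rayZ z_e α h) (cos (α h)) t :=
  (hasDerivAt_mul_const (cos (α h))).const_add (z_e h)

lemma rayJdet_eq (hr : HasDerivAt r_e r' h) (hz : HasDerivAt z_e z' h)
    (hα : HasDerivAt α α' h) (φ t : ℝ) :
    rayJdet r_e z_e α h φ t =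
      rayR r_e α h t * (r' * cos (α h) + z' * sin (α h) - t * α') := by
  have deriv_height : deriv (fun x ↦ rayF r_e z_e α x φ t) h = ofCylindrical _ φ _ :=
    (hasDerivAt_ofCylindrical_meridian (hasDerivAt_rayR_height hr hα t)
      (hasDerivAt_rayZ_height hz hα t) φ).deriv
  have deriv_angle : deriv (fun θ ↦ rayF r_e z_e α h θ t) φ =
      ![-(rayR r_e α h t * sin φ), rayR r_e α h t * cos φ, 0] :=
    (hasDerivAt_ofCylindrical_angle (rayR r_e α h t) φ (rayZ z_e α h t)).deriv
  have deriv_distance : deriv (fun s ↦ rayF r_e z_e α h φ s) t = ofCylindrical _ φ _ :=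
    (hasDerivAt_ofCylindrical_meridian (hasDerivAt_rayR_distance r_e α h t)
      (hasDerivAt_rayZ_distance z_e α h t) φ).deriv
  rw [rayJdet, deriv_height, deriv_angle, deriv_distance, det_ofCylindrical_columns]
  linear_combination -rayR r_e α h t * t * α' * sin_sq_add_cos_sq (α h)

theorem lens_caustic_parameterization_general (hr : HasDerivAt r_e r' h)
    (hz : HasDerivAt z_e z' h) (hα : HasDerivAt α α' h) (hα' : α' ≠ 0) (φ : ℝ) :
    let tc : ℝ := (r' * cos (α h) + z' * sin (α h)) / α'
    let rc : ℝ := r_e h - tc * sin (α h)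
    let zc : ℝ := z_e h + tc * cos (α h)
    rayF r_e z_e α h φ tc = ![rc * cos φ, rc * sin φ, zc] ∧
      ∀ t, rayJdet r_e z_e α h φ t = 0 ↔ rayR r_e α h t = 0 ∨ t = tc := by
  refine ⟨rfl, fun t ↦ ?_⟩
  rw [rayJdet_eq hr hz hα, mul_eq_zero, sub_eq_zero, eq_div_iff hα', eq_comm (b := t * α')]

end RayFamily

/-- the caustic surface of the lens is parameterized by
`(r_caustic(h), z_caustic(h))`: the exiting ray through `(h,φ)` at the critical
distance `t_c(h)` hits that point, and the Jacobian determinant vanishes there. -/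
theorem lens_caustic_parameterization (r_e z_e α : ℝ → ℝ)
    (hr : Differentiable ℝ r_e) (hz : Differentiable ℝ z_e) (hα : Differentiable ℝ α)
    (h : ℝ) (hα' : deriv α h ≠ 0) :
    ∀ φ : ℝ,
      let tc : ℝ :=
        (deriv r_e h * Real.cos (α h) + deriv z_e h * Real.sin (α h)) / deriv α h
      let rc : ℝ := r_e h - tc * Real.sin (α h)
      let zc : ℝ := z_e h + tc * Real.cos (α h)
      rayF r_e z_e α h φ tc = ![rc * Real.cos φ, rc * Real.sin φ, zc] ∧
      rayJdet r_e z_e α h φ tc = 0 := by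
  intro φ
  obtain ⟨hF, hJ⟩ := lens_caustic_parameterization_general
    (hr h).hasDerivAt (hz h).hasDerivAt (hα h).hasDerivAt hα' φ
  exact ⟨hF, (hJ _).2 (.inr rfl)⟩
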